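/- Let ψ ∈ K̄(z) be a rational function of good reduction with ψ(0) = 0 and |ψ'(0)|_v < 1. Then for every y ∈ K̄ with 0 < |y|_v < 1, one has |ψ(y)|_v < |y|_v; i.e. ψ is strictly contracting toward 0 on the punctured open unit disk. -/

import Mathlib

/-!
Write `W = f'g - fg'`. Expanding the polynomial `f(z)g(a) - f(a)g(z)` at its zero `z = a` gives
`f(y)g(a) - f(a)g(y) = (y - a)(W(a) + k(y - a))` with `k` integral. When `f̄` and `ḡ` have no common
zero and `|f(a)/g(a)| ≤ 1`, the value `g(a)` is a unit, and so is `g(y) ≡ g(a)`. Dividing by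
`g(y)g(a)` therefore leaves absolute values unchanged, and the condition on the derivative says
exactly that `W(a)`, hence `W(a) + k(y - a)`, lies in the maximal ideal.
-/

open Polynomial

noncomputable section

namespace PaperPGR

variable {K : Type*} [Field K]

/-- The ring of integers `{x : K | v x ≤ 1}` of a non-archimedean absolute value. -/
def vints (v : AbsoluteValue K ℝ) (hna : IsNonarchimedean (⇑v)) : Subring K where
  carrier := {x : K | v x ≤ 1}
  mul_mem' := by
    intro a b ha hb
    simp only [Set.mem_setOf_eq, map_mul] at *
    nlinarith [v.nonneg a, v.nonneg b]
  one_mem' := by simp [Set.mem_setOf_eq]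
  add_mem' := by
    intro a b ha hb
    exact le_trans (hna a b) (max_le ha hb)
  zero_mem' := by simp [Set.mem_setOf_eq]
  neg_mem' := by
    intro a ha
    simpa [Set.mem_setOf_eq] using ha

/-- The maximal ideal `{x : K | v x < 1}` of the ring of integers. -/
def vmax (v : AbsoluteValue K ℝ) (hna : IsNonarchimedean (⇑v)) : Ideal (vints v hna) where
  carrier := {x | v (x : K) < 1}
  add_mem' := by
    intro a b ha hb
    simp only [Set.mem_setOf_eq] at *
    calc v ((a : K) + (b : K)) ≤ max (v (a : K)) (v (b : K)) := hna _ _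
      _ < 1 := max_lt ha hb
  zero_mem' := by simp [Set.mem_setOf_eq]
  smul_mem' := by
    intro c x hx
    simp only [Set.mem_setOf_eq, smul_eq_mul] at *
    have : v ((c : K) * (x : K)) = v (c : K) * v (x : K) := map_mul v _ _
    have hc : v (c : K) ≤ 1 := c.2
    have := v.nonneg (c : K)
    have := v.nonneg (x : K)
    calc v (((c * x : vints v hna) : K)) = v ((c : K) * (x : K)) := by norm_cast
      _ = v (c : K) * v (x : K) := map_mul v _ _
      _ < 1 := by nlinarith

/-- View a polynomial with integral coefficients as a polynomial over `K`. -/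
def liftp (v : AbsoluteValue K ℝ) (hna : IsNonarchimedean (⇑v))
    (f : Polynomial (vints v hna)) : Polynomial K :=
  f.map (vints v hna).subtype

/-- The coefficientwise reduction of `f ∈ O[z]` modulo the maximal ideal. -/
def redp (v : AbsoluteValue K ℝ) (hna : IsNonarchimedean (⇑v))
    (f : Polynomial (vints v hna)) : Polynomial ((vints v hna) ⧸ (vmax v hna)) :=
  f.map (Ideal.Quotient.mk (vmax v hna))

/-- `(f, g)` is a normalized representation of a rational function:  `f, g ∈ O[z]` are
coprime (over `K`) and at least one coefficient of `f` or `g` has absolute value `1`. -/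
def GoodRep (v : AbsoluteValue K ℝ) (hna : IsNonarchimedean (⇑v))
    (f g : Polynomial (vints v hna)) : Prop :=
  IsCoprime (liftp v hna f) (liftp v hna g) ∧
    ∃ n : ℕ, v ((f.coeff n : K)) = 1 ∨ v ((g.coeff n : K)) = 1

/-- The rational function `f/g` has good reduction: the reductions of `f` and `g` are coprime
in `k̄[z]` and the reduced degree equals `max (deg f) (deg g)`. -/
def GoodRed (v : AbsoluteValue K ℝ) (hna : IsNonarchimedean (⇑v))
    (f g : Polynomial (vints v hna)) : Prop :=
  IsCoprime (redp v hna f) (redp v hna g) ∧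
    max (redp v hna f).natDegree (redp v hna g).natDegree = max f.natDegree g.natDegree

open Classical in
/-- The self-map of `P¹(K) = K ∪ {∞}` (encoded as `Option K`, with `none = ∞`) induced by the
rational function `f/g` (for `f, g` coprime). -/
def rmap (f g : Polynomial K) : Option K → Option K
  | none =>
      if g.natDegree < f.natDegree then none
      else some (f.coeff g.natDegree / g.leadingCoeff)
  | some x => if g.eval x = 0 then none else some (f.eval x / g.eval x)

/-- The multiplier of the rational function `f/g` at a point of `P¹(K)`; at a point of `K` it is
the value of the derivative `(f/g)' = (f'g - fg')/g²`, and at `∞` it is `ψ'(0)` for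
`ψ(z) = 1/φ(1/z)`, computed via the reflections of `f` and `g` at `d = max (deg f) (deg g)`. -/
def multiplier (f g : Polynomial K) : Option K → K
  | some x => (derivative f * g - f * derivative g).eval x / g.eval x ^ 2
  | none =>
      (derivative (Polynomial.reflect (max f.natDegree g.natDegree) g) *
            Polynomial.reflect (max f.natDegree g.natDegree) f -
          Polynomial.reflect (max f.natDegree g.natDegree) g *
            derivative (Polynomial.reflect (max f.natDegree g.natDegree) f)).eval 0 /
        ((Polynomial.reflect (max f.natDegree g.natDegree) f).eval 0) ^ 2

/-- The Möbius transformation `z ↦ (az+b)/(cz+d)` as a self-map of `P¹(K)`. -/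
def mob (a b c d : K) : Option K → Option K :=
  rmap (C a * X + C b) (C c * X + C d)

/-- The rational function `f/g` (with `f, g` coprime) has potentially good reduction:
some Möbius conjugate `h ∘ (f/g) ∘ h⁻¹` admits a normalized representation `F/G` with
good reduction.  The conjugation relation is expressed as `ψ ∘ h = h ∘ φ` on `P¹(K)`. -/
def PotGoodRed (v : AbsoluteValue K ℝ) (hna : IsNonarchimedean (⇑v))
    (f g : Polynomial K) : Prop :=
  ∃ a b c d : K, a * d - b * c ≠ 0 ∧
    ∃ F G : Polynomial (vints v hna), GoodRep v hna F G ∧ GoodRed v hna F G ∧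
      rmap (liftp v hna F) (liftp v hna G) ∘ mob a b c d = mob a b c d ∘ rmap f g

section Ideal

variable {R : Type*} [CommRing R] {I : Ideal R}

theorem eval_mem_iff_of_sub_mem (p : R[X]) {x y : R} (hxy : x - y ∈ I) :
    p.eval x ∈ I ↔ p.eval y ∈ I := by
  have hsub : p.eval x - p.eval y ∈ I := I.mem_of_dvd (sub_dvd_eval_sub x y p) hxy
  rw [← Ideal.add_mem_iff_right I hsub (b := p.eval y), sub_add_cancel]

theorem eval_notMem_of_isCoprime_map_mk (hI : I ≠ ⊤) {f g : R[X]}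
    (hcop : IsCoprime (f.map (Ideal.Quotient.mk I)) (g.map (Ideal.Quotient.mk I))) {a : R}
    (hf : f.eval a ∈ I) : g.eval a ∉ I := by
  have := Ideal.Quotient.nontrivial_iff.mpr hI
  simpa [eval_map_apply, Ideal.Quotient.eq_zero_iff_mem, hf] using
    aeval_ne_zero_of_isCoprime hcop (Ideal.Quotient.mk I a)

theorem exists_mem_eval_eq_mul_sub {p : R[X]} {a y : R} (hp : p.eval a = 0)
    (hp' : (derivative p).eval a ∈ I) (hy : y - a ∈ I) : ∃ c ∈ I, p.eval y = c * (y - a) := by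
  obtain ⟨k, hk⟩ := binomExpansion p a (y - a)
  refine ⟨(derivative p).eval a + k * (y - a), I.add_mem hp' (I.mul_mem_left k hy), ?_⟩
  rw [add_sub_cancel, hp, zero_add] at hk
  rw [hk]
  ring

theorem exists_mem_eval_mul_eval_sub_eq_mul_sub {f g : R[X]} {a y : R}
    (hW : (derivative f * g - f * derivative g).eval a ∈ I) (hy : y - a ∈ I) :
    ∃ c ∈ I, f.eval y * g.eval a - f.eval a * g.eval y = c * (y - a) := by
  have hp : (f * C (g.eval a) - C (f.eval a) * g).eval a = 0 := by simp
  have hp' : (derivative (f * C (g.eval a) - C (f.eval a) * g)).eval a ∈ I := by simpa using hW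
  simpa using exists_mem_eval_eq_mul_sub hp hp' hy

end Ideal

theorem rmap_some_eq_some_iff {f g : K[X]} {x w : K} :
    rmap f g (some x) = some w ↔ g.eval x ≠ 0 ∧ f.eval x / g.eval x = w := by
  simp [rmap]

section Integers

variable {v : AbsoluteValue K ℝ} {hna : IsNonarchimedean (⇑v)}

theorem mem_vmax_iff {x : vints v hna} : x ∈ vmax v hna ↔ v (x : K) < 1 :=
  Iff.rfl

theorem notMem_vmax_iff {x : vints v hna} : x ∉ vmax v hna ↔ v (x : K) = 1 := by
  rw [mem_vmax_iff, not_lt]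
  exact ⟨x.2.antisymm, ge_of_eq⟩

theorem vmax_ne_top : vmax v hna ≠ ⊤ := by
  simp [Ideal.ne_top_iff_one, notMem_vmax_iff]

theorem eval_coe_liftp (p : (vints v hna)[X]) (x : vints v hna) :
    (liftp v hna p).eval (x : K) = (p.eval x : vints v hna) :=
  eval_map_apply (vints v hna).subtype x

theorem derivative_liftp (p : (vints v hna)[X]) :
    derivative (liftp v hna p) = liftp v hna (derivative p) :=
  derivative_map p (vints v hna).subtype

theorem multiplier_liftp_some (f g : (vints v hna)[X]) (a : vints v hna) :
    multiplier (liftp v hna f) (liftp v hna g) (some (a : K)) =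
      ((derivative f * g - f * derivative g).eval a : vints v hna) /
        ((g.eval a : vints v hna) : K) ^ 2 := by
  simp [multiplier, derivative_liftp, eval_coe_liftp]

theorem eval_notMem_vmax_of_abs_div_le_one {f g : (vints v hna)[X]}
    (hcop : IsCoprime (redp v hna f) (redp v hna g)) {a : vints v hna}
    (hga : ((g.eval a : vints v hna) : K) ≠ 0)
    (hle : v ((f.eval a : vints v hna) / (g.eval a : vints v hna)) ≤ 1) :
    g.eval a ∉ vmax v hna := by
  intro hmem
  rw [map_div₀, div_le_one (v.pos hga)] at hle
  exact eval_notMem_of_isCoprime_map_mk vmax_ne_top hcop (hle.trans_lt hmem) hmem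

theorem abs_div_eval_sub_div_eval_lt {f g : (vints v hna)[X]} {a y : vints v hna}
    (hga : g.eval a ∉ vmax v hna)
    (hW : (derivative f * g - f * derivative g).eval a ∈ vmax v hna)
    (hya : y ≠ a) (hy : y - a ∈ vmax v hna) :
    v ((f.eval y : vints v hna) / (g.eval y : vints v hna) -
      (f.eval a : vints v hna) / (g.eval a : vints v hna)) < v ((y : K) - a) := by
  have hgy : g.eval y ∉ vmax v hna := (eval_mem_iff_of_sub_mem g hy).not.mpr hga
  rw [notMem_vmax_iff] at hga hgy
  have hne : ∀ {x : K}, v x = 1 → x ≠ 0 := fun hx => v.ne_zero_iff.mp (by simp [hx])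
  have hpos : 0 < v ((y : K) - a) := v.pos (sub_ne_zero.mpr (Subtype.coe_ne_coe.mpr hya))
  obtain ⟨c, hc, hcy⟩ := exists_mem_eval_mul_eval_sub_eq_mul_sub hW hy
  have hcyK : ((f.eval y : vints v hna) : K) * (g.eval a : vints v hna) -
      (g.eval y : vints v hna) * (f.eval a : vints v hna) = c * (y - a) := by
    rw [mul_comm ((g.eval y : vints v hna) : K)]
    exact_mod_cast congrArg ((↑) : vints v hna → K) hcy
  rw [div_sub_div _ _ (hne hgy) (hne hga), hcyK, map_div₀, map_mul, map_mul, hga, hgy, one_mul,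
    div_one]
  exact mul_lt_of_lt_one_left hpos hc

end Integers

theorem good_reduction_attracting_contracts_general (v : AbsoluteValue K ℝ)
    (hna : IsNonarchimedean (⇑v)) (f g : (vints v hna)[X])
    (hcop : IsCoprime (redp v hna f) (redp v hna g)) {a b : K} (ha : v a ≤ 1) (hb : v b ≤ 1)
    (hab : rmap (liftp v hna f) (liftp v hna g) (some a) = some b)
    (hattr : v (multiplier (liftp v hna f) (liftp v hna g) (some a)) < 1)
    {y : K} (hy0 : 0 < v (y - a)) (hy1 : v (y - a) < 1) :
    ∃ w : K, rmap (liftp v hna f) (liftp v hna g) (some y) = some w ∧ v (w - b) < v (y - a) := by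
  lift a to vints v hna using ha
  have hy : y ∈ vints v hna := by
    simpa using (vints v hna).add_mem (show y - a ∈ vints v hna from hy1.le) a.2
  lift y to vints v hna using hy
  obtain ⟨hga0, rfl⟩ := rmap_some_eq_some_iff.mp hab
  rw [eval_coe_liftp] at hga0
  rw [eval_coe_liftp, eval_coe_liftp] at hb ⊢
  have hga : g.eval a ∉ vmax v hna := eval_notMem_vmax_of_abs_div_le_one hcop hga0 hb
  have hW : (derivative f * g - f * derivative g).eval a ∈ vmax v hna := by
    rw [multiplier_liftp_some, map_div₀, map_pow, notMem_vmax_iff.mp hga] at hattr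
    simpa [mem_vmax_iff] using hattr
  have hya : y ≠ a := by
    rintro rfl
    simp at hy0
  have hgy : g.eval y ∉ vmax v hna := (eval_mem_iff_of_sub_mem g hy1).not.mpr hga
  refine ⟨_, rmap_some_eq_some_iff.mpr ⟨?_, rfl⟩, ?_⟩
  · simpa [eval_coe_liftp] using (ne_of_mem_of_not_mem (zero_mem _) hgy).symm
  · rw [eval_coe_liftp, eval_coe_liftp]
    exact abs_div_eval_sub_div_eval_lt hga hW hya hy1

/-- if `ψ` has good reduction, `ψ(0) = 0`, and `|ψ'(0)|_v < 1`, then `ψ` is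
strictly contracting toward `0` on the punctured open unit disk: for `0 < |y|_v < 1` one has
`ψ(y) ∈ K` with `|ψ(y)|_v < |y|_v`. -/
theorem good_reduction_attracting_contracts {K : Type*} [Field K] [IsAlgClosed K]
    (v : AbsoluteValue K ℝ) (hna : IsNonarchimedean (⇑v))
    (f g : Polynomial (vints v hna))
    (hrep : GoodRep v hna f g) (hgood : GoodRed v hna f g)
    (hfix : rmap (liftp v hna f) (liftp v hna g) (some 0) = some 0)
    (hattr : v (multiplier (liftp v hna f) (liftp v hna g) (some 0)) < 1) :
    ∀ y : K, 0 < v y → v y < 1 →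
      ∃ w : K, rmap (liftp v hna f) (liftp v hna g) (some y) = some w ∧ v w < v y := by
  intro y hy0 hy1
  simpa using good_reduction_attracting_contracts_general v hna f g hgood.1 (by simp) (by simp)
    hfix hattr (y := y) (by simpa using hy0) (by simpa using hy1)

end PaperPGR
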